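/- Let 𝒳, 𝒰, 𝒲 be arbitrary types, f : 𝒳 × 𝒰 × 𝒲 → 𝒳, Y ⊆ 𝒳 × 𝒰, and W : 𝒳 × 𝒰 → Set 𝒲. Call a set S ⊆ 𝒳 robust control invariant if for every x ∈ S there exists u with (x,u) ∈ Y such that f(x,u,w) ∈ S for all w ∈ W(x,u). For Ω ⊆ 𝒳 define Pre(Ω) = {x | there exists u with (x,u) ∈ Y such that for all w ∈ W(x,u), f(x,u,w) ∈ Ω}, and given X_f ⊆ 𝒳 define the sequence X₀ = X_f, X_{t+1} = Pre(X_t). Then X_t is robust control invariant for every t ∈ ℕ if and only if X_f is robust control invariant. -/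

import Mathlib

section RobustControlInvariance

variable {X U W : Type*} {f : X × U × W → X} {Y : Set (X × U)} {Wset : X × U → Set W}
  {S : Set X}

/-- The predecessor set `Pre(Ω)` of the system `x⁺ = f(x, u, w)`: the states from which some
admissible control, chosen before the disturbance is known, forces the next state into `Ω`. -/
def robustPredecessor (f : X × U × W → X) (Y : Set (X × U)) (Wset : X × U → Set W)
    (Ω : Set X) : Set X :=
  {x | ∃ u, (x, u) ∈ Y ∧ ∀ w ∈ Wset (x, u), f (x, u, w) ∈ Ω}

/-- Robust control invariance of `S`: from every state of `S` some admissible control keeps the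
next state in `S` under all allowable disturbances. -/
def IsRobustControlInvariant (f : X × U × W → X) (Y : Set (X × U)) (Wset : X × U → Set W)
    (S : Set X) : Prop :=
  ∀ x ∈ S, ∃ u, (x, u) ∈ Y ∧ ∀ w ∈ Wset (x, u), f (x, u, w) ∈ S

theorem robustPredecessor_mono : Monotone (robustPredecessor f Y Wset) :=
  fun _ _ hΩ _ ⟨u, hu, hw⟩ ↦ ⟨u, hu, fun w hmem ↦ hΩ (hw w hmem)⟩

theorem isRobustControlInvariant_iff_subset_robustPredecessor :
    IsRobustControlInvariant f Y Wset S ↔ S ⊆ robustPredecessor f Y Wset S :=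
  Iff.rfl

theorem IsRobustControlInvariant.robustPredecessor (hS : IsRobustControlInvariant f Y Wset S) :
    IsRobustControlInvariant f Y Wset (robustPredecessor f Y Wset S) := by
  rw [isRobustControlInvariant_iff_subset_robustPredecessor] at hS ⊢
  exact robustPredecessor_mono hS

end RobustControlInvariance

/-- The backward recursion `X₀ = X_f`, `X_{t+1} = Pre(X_t)` produces robust control
invariant sets at every step if and only if the seed set `X_f` is robust control
invariant. -/
theorem backward_recursion_invariant_iff
    {X U W : Type*} (f : X × U × W → X) (Y : Set (X × U))
    (Wset : X × U → Set W) (Xf : Set X) (Xseq : ℕ → Set X)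
    (h0 : Xseq 0 = Xf)
    (hrec : ∀ t, Xseq (t + 1)
      = {x : X | ∃ u : U, (x, u) ∈ Y ∧ ∀ w ∈ Wset (x, u), f (x, u, w) ∈ Xseq t}) :
    (∀ t : ℕ, ∀ x ∈ Xseq t,
        ∃ u : U, (x, u) ∈ Y ∧ ∀ w ∈ Wset (x, u), f (x, u, w) ∈ Xseq t)
      ↔ (∀ x ∈ Xf, ∃ u : U, (x, u) ∈ Y ∧ ∀ w ∈ Wset (x, u), f (x, u, w) ∈ Xf) := by
  change (∀ t, IsRobustControlInvariant f Y Wset (Xseq t)) ↔ IsRobustControlInvariant f Y Wset Xf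
  replace hrec : ∀ t, Xseq (t + 1) = robustPredecessor f Y Wset (Xseq t) := hrec
  subst h0
  refine ⟨fun h ↦ h 0, fun h t ↦ ?_⟩
  induction t with
  | zero => exact h
  | succ t ih =>
    rw [hrec]
    exact ih.robustPredecessor
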